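/- Fix an integer r ≥ 1 and let K_r = ℚ(x_0, …, x_{r-1}, y_0, …, y_{r-1}) be the field of rational functions in 2r indeterminates over ℚ; adopt the convention x_j = 1 for j < 0 or j ≥ r. For 0 ≤ i ≤ r−1 and 0 ≤ n ≤ r−i define X_{i,n} = Σ_{k=0}^{n} (∏_{j=i}^{i+k-1} y_j) · x_{i-1} x_{i+n} / (x_{i+k-1} x_{i+k}) ∈ K_r (empty products equal 1). Then for every 0 ≤ i ≤ r−2 and 1 ≤ n ≤ r−1−i, the three-term relation X_{i,n} · X_{i+n,1} = X_{i,n+1} + y_{i+n} · X_{i,n-1} holds in K_r. -/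

import Mathlib

/-- The field `K_r = ℚ(x_0, …, x_{r-1}, y_0, …, y_{r-1})` of rational functions in `2r`
indeterminates over `ℚ`. -/
abbrev Kr (r : ℕ) := FractionRing (MvPolynomial (Fin r ⊕ Fin r) ℚ)

/-- The element `x_j` of `K_r`, with the convention `x_j = 1` for `j < 0` or `j ≥ r`. -/
noncomputable def xcl (r : ℕ) (j : ℤ) : Kr r :=
  if h : 0 ≤ j ∧ j < (r : ℤ) then
    algebraMap (MvPolynomial (Fin r ⊕ Fin r) ℚ) (Kr r)
      (MvPolynomial.X (Sum.inl ⟨j.toNat, by omega⟩))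
  else 1

/-- The element `y_j` of `K_r` (by convention `1` out of range, which is never used). -/
noncomputable def ycl (r : ℕ) (j : ℤ) : Kr r :=
  if h : 0 ≤ j ∧ j < (r : ℤ) then
    algebraMap (MvPolynomial (Fin r ⊕ Fin r) ℚ) (Kr r)
      (MvPolynomial.X (Sum.inr ⟨j.toNat, by omega⟩))
  else 1

/-- The Laurent expansion `X_{i,n} = Σ_{k=0}^{n} (∏_{j=i}^{i+k-1} y_j) ·
x_{i-1} x_{i+n} / (x_{i+k-1} x_{i+k})` of the cluster character with principal
coefficients of the indecomposable module `S_i^{(n)}`. -/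
noncomputable def Xcl (r : ℕ) (i : ℤ) (n : ℕ) : Kr r :=
  ∑ k ∈ Finset.range (n + 1),
    (∏ j ∈ Finset.range k, ycl r (i + (j : ℕ))) *
      xcl r (i - 1) * xcl r (i + (n : ℕ)) /
        (xcl r (i + (k : ℕ) - 1) * xcl r (i + (k : ℕ)))

theorem xcl_ne_zero_aux (r : ℕ) (j : ℤ) : xcl r j ≠ 0 := by
  unfold xcl
  split_ifs with h
  · rw [Ne, FaithfulSMul.algebraMap_eq_zero_iff]
    exact MvPolynomial.X_ne_zero _
  · exact one_ne_zero

theorem Xcl_eq_aux (r : ℕ) (i : ℤ) (n : ℕ) : Xcl r i n = xcl r (i + (n : ℕ)) *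
    ∑ k ∈ Finset.range (n + 1), (∏ j ∈ Finset.range k, ycl r (i + (j : ℕ))) *
      xcl r (i - 1) / (xcl r (i + (k : ℕ) - 1) * xcl r (i + (k : ℕ))) := by
  unfold Xcl
  rw [Finset.mul_sum]
  refine Finset.sum_congr rfl fun k _ => ?_
  ring

/-- Lemma 3.2: the three-term relation
`X_{i,n} · X_{i+n,1} = X_{i,n+1} + y_{i+n} · X_{i,n-1}`. -/
theorem cluster_character_typeA_three_term (r : ℕ) (hr : 1 ≤ r) (i : ℤ) (n : ℕ)
    (hi0 : 0 ≤ i) (hir : i ≤ (r : ℤ) - 2) (hn : 1 ≤ n)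
    (hnr : (n : ℤ) ≤ (r : ℤ) - 1 - i) :
    Xcl r i n * Xcl r (i + (n : ℕ)) 1 =
      Xcl r i (n + 1) + ycl r (i + (n : ℕ)) * Xcl r i (n - 1) := by
  obtain ⟨m, rfl⟩ : ∃ m, n = m + 1 := ⟨n - 1, by omega⟩
  have h1 : Xcl r (i + ((m + 1 : ℕ) : ℤ)) 1 =
      (xcl r (i + m + 2) + ycl r (i + m + 1) * xcl r (i + m)) / xcl r (i + m + 1) := by
    unfold Xcl
    have e1 : i + ((m + 1 : ℕ) : ℤ) - 1 = i + m := by push_cast; ring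
    have e2 : i + ((m + 1 : ℕ) : ℤ) + 1 = i + m + 2 := by push_cast; ring
    have e3 : i + ((m + 1 : ℕ) : ℤ) = i + m + 1 := by push_cast; ring
    have e4 : i + (m : ℤ) + 1 - 1 = i + m := by ring
    have e5 : i + (m : ℤ) + 1 + 1 = i + m + 2 := by ring
    have e6 : i + (m : ℤ) + 2 - 1 = i + m + 1 := by ring
    simp only [Finset.sum_range_succ, Finset.prod_range_succ, Finset.sum_range_zero,
      Finset.prod_range_zero, Nat.cast_zero, Nat.cast_one, add_zero, e3, e4, e5, e6, zero_add,
      one_mul]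
    have a := xcl_ne_zero_aux r (i + m)
    have b := xcl_ne_zero_aux r (i + m + 1)
    have c := xcl_ne_zero_aux r (i + m + 2)
    field_simp
  rw [h1, Nat.add_sub_cancel, Xcl_eq_aux, Xcl_eq_aux r i (m + 1 + 1), Xcl_eq_aux r i m]
  rw [Finset.sum_range_succ _ (m + 1 + 1), Finset.sum_range_succ _ (m + 1),
    Finset.prod_range_succ _ (m + 1)]
  have e3 : i + ((m + 1 : ℕ) : ℤ) = i + m + 1 := by push_cast; ring
  have e4 : i + ((m + 1 + 1 : ℕ) : ℤ) = i + m + 2 := by push_cast; ring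
  have e5 : i + (m : ℤ) + 1 - 1 = i + m := by ring
  have e6 : i + (m : ℤ) + 2 - 1 = i + m + 1 := by ring
  rw [e3, e4, e5, e6]
  generalize (∑ k ∈ Finset.range (m + 1), (∏ j ∈ Finset.range k, ycl r (i + (j : ℕ))) *
      xcl r (i - 1) / (xcl r (i + (k : ℕ) - 1) * xcl r (i + (k : ℕ)))) = S
  generalize (∏ j ∈ Finset.range (m + 1), ycl r (i + (j : ℕ))) = P
  have a := xcl_ne_zero_aux r (i + m)
  have b := xcl_ne_zero_aux r (i + m + 1)
  have c := xcl_ne_zero_aux r (i + m + 2)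
  field_simp
  ring
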